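/- Let V be a pseudo-Euclidean space with a nontrivial orthogonal decomposition V = V₁ ⊕ V₂ into nonzero nondegenerate subspaces. Let 𝔥₁ ⊆ so(V₁) be a subalgebra satisfying one of: (i) 𝔥₁ is a proper irreducible subalgebra of so(V₁); (ii) 𝔥₁ preserves a proper nondegenerate subspace of V₁; (iii) V₁ is Euclidean and 𝔥₁ is a proper subalgebra of so(V₁). Let 𝔥₂ ⊆ so(V₂) be an arbitrary subalgebra. Then ℛ(𝔥₁ ⊕ 𝔥₂ ⊕ ℝ·id_V) = ℛ(𝔥₁ ⊕ 𝔥₂); in particular L(ℛ(𝔥₁ ⊕ 𝔥₂ ⊕ ℝ·id_V)) ⊆ 𝔥₁ ⊕ 𝔥₂ and 𝔥₁ ⊕ 𝔥₂ ⊕ ℝ·id_V ⊆ co(V) is not a Berger algebra. -/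

import Mathlib

/-!
Let `R` have type `ℝ·id ⊕ 𝔥₁ ⊕ 𝔥₂` and write `R(x, y) = θ(x, y)·id + A₁(x, y) + A₂(x, y)`. If
`x, y ∈ V₁` and `z ∈ V₂`, then the Bianchi identity puts `R(x, y)z ∈ V₂` into `V₁`, so that
`R(x, y)z = 0`. Pairing with a non-null `z` gives `θ(x, y) = 0`, and likewise on `V₂`. The Bianchi
identity is thereby reduced to `R(x, z)y = R(y, z)x`: the map `x ↦ R(x, z)|V₁` lies in the first
prolongation of `ℝ·id ⊕ 𝔥₁` on `V₁`. Since the first prolongation of `so(V₁)` vanishes, that of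
`co(V₁)` consists of the maps `x ↦ ⟨a, x⟩·id + a ∧ x` with `a ∈ V₁`, so that `a ∧ V₁ ⊆ 𝔥₁` for the
vector `a` dual to `θ(·, z)`. Each of the three conditions on `𝔥₁` excludes nonzero vectors `a` with
this property, hence `θ = 0`.
-/

open Module

noncomputable section

namespace Weyl

variable {V : Type*} [AddCommGroup V] [Module ℝ V]

/-- The endomorphism `X ∧ Y : Z ↦ B(X,Z)•Y − B(Y,Z)•X`. -/
def wedge (B : LinearMap.BilinForm ℝ V) (X Y : V) : Module.End ℝ V where
  toFun Z := B X Z • Y - B Y Z • X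
  map_add' z z' := by simp only [map_add, add_smul]; abel
  map_smul' c z := by simp only [map_smul, smul_eq_mul, RingHom.id_apply, mul_smul, smul_sub]

/-- The Lie algebra `so(B)` of endomorphisms skew-symmetric with respect to `B`. -/
def soSet (B : LinearMap.BilinForm ℝ V) : Set (Module.End ℝ V) :=
  {A | ∀ x y, B (A x) y + B x (A y) = 0}

/-- The conformal Lie algebra `co(B) = ℝ·id ⊕ so(B)`. -/
def coSet (B : LinearMap.BilinForm ℝ V) : Set (Module.End ℝ V) :=
  {F | ∃ c : ℝ, ∃ S ∈ soSet B, F = c • (1 : Module.End ℝ V) + S}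

/-- The first prolongation `g^{(1)}` of a set of endomorphisms:
linear maps `φ : V → g` with `φ(X)Y = φ(Y)X`. -/
def firstProlong (g : Set (Module.End ℝ V)) : Set (V →ₗ[ℝ] Module.End ℝ V) :=
  {φ | (∀ x, φ x ∈ g) ∧ ∀ x y, φ x y = φ y x}

/-- `R` is an algebraic curvature tensor of type `g` (a linear map on `Λ²V`,
encoded as an antisymmetric bilinear map, with values in `g`, satisfying the
Bianchi identity). -/
def IsCurv (g : Set (Module.End ℝ V)) (R : V →ₗ[ℝ] V →ₗ[ℝ] Module.End ℝ V) : Prop :=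
  (∀ x y, R x y = - R y x) ∧ (∀ x y, R x y ∈ g) ∧
    ∀ x y z, R x y z + R y z x + R z x y = 0

/-- `L(ℛ(g))`: the span of all values of algebraic curvature tensors of type `g`. -/
def curvSpan (g : Set (Module.End ℝ V)) : Submodule ℝ (Module.End ℝ V) :=
  Submodule.span ℝ {F | ∃ R, IsCurv g R ∧ ∃ x y, F = R x y}

/-- `g` is a Berger algebra: `L(ℛ(g)) = g`. -/
def IsBerger (g : Set (Module.End ℝ V)) : Prop :=
  (curvSpan g : Set (Module.End ℝ V)) = g

/-- `g` is (the underlying set of) a Lie subalgebra of `gl(V)`. -/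
def IsLieSub (g : Set (Module.End ℝ V)) : Prop :=
  (0 : Module.End ℝ V) ∈ g ∧ (∀ F ∈ g, ∀ F' ∈ g, F + F' ∈ g) ∧
    (∀ (c : ℝ), ∀ F ∈ g, c • F ∈ g) ∧ ∀ F ∈ g, ∀ F' ∈ g, F * F' - F' * F ∈ g

/-- The subspace `W` is invariant under every element of `g`. -/
def Invariant (g : Set (Module.End ℝ V)) (W : Submodule ℝ V) : Prop :=
  ∀ F ∈ g, ∀ x ∈ W, F x ∈ W

/-- The restriction of `B` to `W` is nondegenerate. -/
def IsNondegOn (B : LinearMap.BilinForm ℝ V) (W : Submodule ℝ V) : Prop :=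
  ∀ x ∈ W, (∀ y ∈ W, B x y = 0) → x = 0

/-- Weak irreducibility: no proper nonzero invariant nondegenerate subspace. -/
def WeaklyIrred (B : LinearMap.BilinForm ℝ V) (g : Set (Module.End ℝ V)) : Prop :=
  ∀ W : Submodule ℝ V, Invariant g W → IsNondegOn B W → W = ⊥ ∨ W = ⊤

/-- Irreducibility: no proper nonzero invariant subspace. -/
def Irred (g : Set (Module.End ℝ V)) : Prop :=
  ∀ W : Submodule ℝ V, Invariant g W → W = ⊥ ∨ W = ⊤

/-- `so(W)` regarded as a subalgebra of `so(V)`: skew-symmetric endomorphisms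
preserving `W` and acting by zero on the complementary summand `W'`. -/
def soPart (B : LinearMap.BilinForm ℝ V) (W W' : Submodule ℝ V) :
    Set (Module.End ℝ V) :=
  {A | A ∈ soSet B ∧ (∀ x ∈ W, A x ∈ W) ∧ ∀ y ∈ W', A y = 0}

attribute [local instance] LieRing.ofAssociativeRing

/-- A Lie subalgebra in the sense of `IsLieSub`, bundled. -/
def IsLieSub.toLieSubalgebra {g : Set (Module.End ℝ V)} (hg : IsLieSub g) :
    LieSubalgebra ℝ (Module.End ℝ V) where
  carrier := g
  zero_mem' := hg.1
  add_mem' := fun hF hF' => hg.2.1 _ hF _ hF'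
  smul_mem' := fun c _ hF => hg.2.2.1 c _ hF
  lie_mem' := fun hF hF' => hg.2.2.2 _ hF _ hF'

lemma exists_dual_sub_smul_mem {K E : Type*} [Field K] [AddCommGroup E] [Module K E] {v : E}
    {p : Submodule K E} (hv : v ∉ p) :
    ∃ f : Dual K E, ∀ u ∈ Submodule.span K {v} ⊔ p, u - f u • v ∈ p := by
  obtain ⟨f, hfv, hfp⟩ := Submodule.exists_le_ker_of_notMem hv
  refine ⟨(f v)⁻¹ • f, fun u hu => ?_⟩
  obtain ⟨c, w, hw, rfl⟩ : ∃ c : K, ∃ w ∈ p, c • v + w = u := by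
    simpa [Submodule.mem_sup, Submodule.mem_span_singleton] using hu
  have hfw : f w = 0 := hfp hw
  have hscale : ((f v)⁻¹ • f) (c • v + w) = c := by simp [hfw, mul_left_comm, hfv]
  rwa [hscale, add_sub_cancel_left]

/-! ### Nondegenerate subspaces -/

section Nondegenerate

variable {B : LinearMap.BilinForm ℝ V} {W : Submodule ℝ V}

lemma isNondegOn_of_pos (hpos : ∀ x ∈ W, x ≠ 0 → 0 < B x x) : IsNondegOn B W := by
  intro x hx hxW
  by_contra hx0
  exact (hpos x hx hx0).ne' (hxW x hx)

lemma IsNondegOn.restrict_nondegenerate (hW : IsNondegOn B W) (hB : B.IsSymm) :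
    (B.restrict W).Nondegenerate :=
  (hB.restrict W).isRefl.nondegenerate_iff_separatingLeft.2 fun x hx =>
    Subtype.ext (hW x x.2 fun y hy => hx ⟨y, hy⟩)

lemma IsNondegOn.exists_self_ne_zero (hW : IsNondegOn B W) (hB : B.IsSymm) (hbot : W ≠ ⊥) :
    ∃ z ∈ W, B z z ≠ 0 := by
  have hne : B.restrict W ≠ 0 := fun h0 =>
    hbot ((Submodule.eq_bot_iff W).2 fun x hx =>
      hW x hx fun y hy => LinearMap.congr_fun₂ h0 ⟨x, hx⟩ ⟨y, hy⟩)
  obtain ⟨z, hz⟩ := LinearMap.BilinForm.exists_bilinForm_self_ne_zero hne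
    (LinearMap.BilinForm.isSymm_iff.1 (hB.restrict W))
  exact ⟨z, z.2, hz⟩

lemma IsNondegOn.exists_apply_eq [FiniteDimensional ℝ W] (hW : IsNondegOn B W) (hB : B.IsSymm)
    (f : Dual ℝ V) : ∃ w ∈ W, ∀ u ∈ W, B w u = f u := by
  obtain ⟨w, hw⟩ := ((B.restrict W).toDual (hW.restrict_nondegenerate hB)).surjective
    (f ∘ₗ W.subtype)
  exact ⟨w, w.2, fun u hu => LinearMap.congr_fun hw ⟨u, hu⟩⟩

lemma sum_apply_smul_dualBasis {K E ι : Type*} [Field K] [AddCommGroup E] [Module K E]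
    [Fintype ι] [DecidableEq ι] {C : LinearMap.BilinForm K E} (hC : C.Nondegenerate)
    (hsymm : C.IsSymm) (b : Basis ι K E) (z : E) : ∑ i, C (b i) z • C.dualBasis hC b i = z := by
  simpa [hsymm.eq] using (C.dualBasis hC b).sum_repr z

end Nondegenerate

/-! ### Skew-symmetric endomorphisms and wedges -/

section Skew

variable {B : LinearMap.BilinForm ℝ V} {W W' : Submodule ℝ V} {A A' : Module.End ℝ V}

lemma wedge_apply (X Y Z : V) : wedge B X Y Z = B X Z • Y - B Y Z • X := rfl

lemma wedge_zero_left (Y : V) : wedge B 0 Y = 0 := by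
  ext Z; simp [wedge_apply]

lemma wedge_add_left (X X' Y : V) : wedge B (X + X') Y = wedge B X Y + wedge B X' Y := by
  ext Z
  simp only [wedge_apply, map_add, LinearMap.add_apply]
  module

lemma wedge_smul_left (c : ℝ) (X Y : V) : wedge B (c • X) Y = c • wedge B X Y := by
  ext Z
  simp only [wedge_apply, map_smul, LinearMap.smul_apply, smul_eq_mul]
  module

lemma apply_left_of_mem_soSet (hA : A ∈ soSet B) (x y : V) : B (A x) y = -B x (A y) :=
  eq_neg_of_add_eq_zero_left (hA x y)

lemma apply_self_of_mem_soSet (hB : B.IsSymm) (hA : A ∈ soSet B) (x : V) : B (A x) x = 0 := by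
  have h := hA x x
  rw [hB.eq x (A x)] at h
  linarith

lemma mem_soSet_iff : A ∈ soSet B ↔ A ∈ B.skewAdjointSubmodule := by
  simp [soSet, LinearMap.IsSkewAdjoint, LinearMap.IsAdjointPair, add_eq_zero_iff_eq_neg]

lemma wedge_mem_soSet (hB : B.IsSymm) (X Y : V) : wedge B X Y ∈ soSet B := by
  intro x y
  simp only [wedge_apply, map_sub, LinearMap.sub_apply, map_smul, LinearMap.smul_apply,
    smul_eq_mul, hB.eq x]
  ring

lemma one_notMem_soSet {z : V} (hz : B z z ≠ 0) : (1 : Module.End ℝ V) ∉ soSet B := by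
  intro h
  have h2 : B z z + B z z = 0 := h z z
  exact hz (by linarith)

lemma eq_zero_of_sub_smul_one_mem_soSet (hB : B.IsSymm) {F : Module.End ℝ V} {c : ℝ}
    (hF : F - c • 1 ∈ soSet B) {w : V} (hFw : F w = 0) (hw : B w w ≠ 0) : c = 0 := by
  have h := apply_self_of_mem_soSet hB hF w
  simpa [hFw, hw] using h

lemma lie_wedge (hA : A ∈ soSet B) (X Y : V) :
    ⁅A, wedge B X Y⁆ = wedge B (A X) Y + wedge B X (A Y) := by
  ext Z
  simp only [Ring.lie_def, wedge_apply, LinearMap.sub_apply, LinearMap.add_apply,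
    Module.End.mul_apply, map_sub, map_smul, apply_left_of_mem_soSet hA]
  module

lemma sub_mem_soPart (hA : A ∈ soPart B W W') (hA' : A' ∈ soPart B W W') :
    A - A' ∈ soPart B W W' :=
  ⟨mem_soSet_iff.2 (sub_mem (mem_soSet_iff.1 hA.1) (mem_soSet_iff.1 hA'.1)),
    fun x hx => W.sub_mem (hA.2.1 x hx) (hA'.2.1 x hx),
    fun y hy => by rw [LinearMap.sub_apply, hA.2.2 y hy, hA'.2.2 y hy, sub_zero]⟩

lemma wedge_mem_soPart (hB : B.IsSymm) (horth : ∀ x ∈ W, ∀ y ∈ W', B x y = 0) {X Y : V}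
    (hX : X ∈ W) (hY : Y ∈ W) : wedge B X Y ∈ soPart B W W' :=
  ⟨wedge_mem_soSet hB X Y, fun _ _ => W.sub_mem (W.smul_mem _ hY) (W.smul_mem _ hX),
    fun z hz => by simp [wedge_apply, horth X hX z hz, horth Y hY z hz]⟩

lemma sum_wedge_dualBasis_eq_two_smul (hB : B.IsSymm) (hcompl : Codisjoint W W')
    (horth : ∀ x ∈ W, ∀ y ∈ W', B x y = 0) (hW : (B.restrict W).Nondegenerate)
    {ι : Type*} [Fintype ι] [DecidableEq ι] (b : Basis ι ℝ W) (hA : A ∈ soPart B W W') :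
    ∑ i, wedge B (b i) (A ((B.restrict W).dualBasis hW b i)) = (2 : ℝ) • A := by
  obtain ⟨hskew, hpres, hzero⟩ := hA
  let d := (B.restrict W).dualBasis hW b
  have expand_d (z : W) : ∑ i, B (b i) z • (d i : V) = z := by
    simpa using congrArg W.subtype (sum_apply_smul_dualBasis hW (hB.restrict W) b z)
  have expand_b (z : W) : ∑ i, B (d i) z • (b i : V) = z := by
    have h := sum_apply_smul_dualBasis hW (hB.restrict W) d z
    rw [LinearMap.BilinForm.dualBasis_dualBasis hW (hB.restrict W)] at h
    simpa using congrArg W.subtype h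
  refine LinearMap.ext_on_codisjoint hcompl (fun z hz => ?_) fun z hz => ?_
  · have hfirst : ∑ i, B (b i) z • A (d i) = A z := by
      simpa using congrArg A (expand_d ⟨z, hz⟩)
    have hsecond : ∑ i, B (A (d i)) z • (b i : V) = -A z := by
      simpa [apply_left_of_mem_soSet hskew] using expand_b ⟨A z, hpres z hz⟩
    simp only [LinearMap.sum_apply, wedge_apply, Finset.sum_sub_distrib, LinearMap.smul_apply]
    rw [hfirst, hsecond, sub_neg_eq_add, two_smul]
  · simp [wedge_apply, hzero z hz, horth _ (b _).2 z hz, horth _ (hpres _ (d _).2) z hz, d]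

/-- The first prolongation of `so(W)` vanishes. -/
lemma eq_zero_of_apply_comm_of_mem_soPart (hB : B.IsSymm) (hW : IsNondegOn B W)
    (hcompl : Codisjoint W W') {D : V → Module.End ℝ V} (hD : ∀ x ∈ W, D x ∈ soPart B W W')
    (hcomm : ∀ x ∈ W, ∀ y ∈ W, D x y = D y x) {x : V} (hx : x ∈ W) : D x = 0 := by
  refine LinearMap.ext_on_codisjoint hcompl (fun y hy => ?_) (hD x hx).2.2
  refine hW _ ((hD x hx).2.1 y hy) fun z hz => ?_
  have hskew {u v w : V} (hu : u ∈ W) : B (D u v) w = -B (D u w) v := by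
    rw [apply_left_of_mem_soSet (hD u hu).1, hB.eq]
  -- A trilinear form symmetric in its first two and skew in its last two arguments is zero.
  refine self_eq_neg.1 ?_
  calc B (D x y) z = -B (D x z) y := hskew hx
    _ = -B (D z x) y := by rw [hcomm x hx z hz]
    _ = B (D z y) x := by rw [hskew hz, neg_neg]
    _ = B (D y z) x := by rw [hcomm z hz y hy]
    _ = -B (D y x) z := hskew hy
    _ = -B (D x y) z := by rw [hcomm y hy x hx]

end Skew

/-! ### Vectors whose wedges lie in a subalgebra -/

section WedgeSubmodule

variable {B : LinearMap.BilinForm ℝ V} {W W' : Submodule ℝ V}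

/-- The space of all `a ∈ W` with `a ∧ W ⊆ h`. For `h ⊆ so(W)` it parametrises the first
prolongation of `ℝ·id ⊕ h` on `W`, the vector `a` corresponding to `x ↦ B(a, x)·id + a ∧ x`. -/
def wedgeSubmodule (B : LinearMap.BilinForm ℝ V) (W : Submodule ℝ V)
    (h : Submodule ℝ (Module.End ℝ V)) : Submodule ℝ V where
  carrier := {a | a ∈ W ∧ ∀ Y ∈ W, wedge B a Y ∈ h}
  zero_mem' := ⟨W.zero_mem, fun Y _ => by rw [wedge_zero_left]; exact h.zero_mem⟩
  add_mem' := fun ha hb => ⟨W.add_mem ha.1 hb.1, fun Y hY => by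
    rw [wedge_add_left]; exact h.add_mem (ha.2 Y hY) (hb.2 Y hY)⟩
  smul_mem' := fun c _ ha => ⟨W.smul_mem c ha.1, fun Y hY => by
    rw [wedge_smul_left]; exact h.smul_mem c (ha.2 Y hY)⟩

lemma wedgeSubmodule_le (h : Submodule ℝ (Module.End ℝ V)) : wedgeSubmodule B W h ≤ W :=
  fun _ ha => ha.1

lemma invariant_wedgeSubmodule {h : LieSubalgebra ℝ (Module.End ℝ V)}
    (hh : (h : Set (Module.End ℝ V)) ⊆ soPart B W W') :
    Invariant h (wedgeSubmodule B W h.toSubmodule) := by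
  rintro F hF a ⟨haW, ha⟩
  obtain ⟨hskew, hpres, -⟩ := hh hF
  refine ⟨hpres a haW, fun Y hY => ?_⟩
  rw [eq_sub_of_add_eq (lie_wedge hskew a Y).symm]
  exact h.sub_mem (h.lie_mem hF (ha Y hY)) (ha _ (hpres Y hY))

lemma soPart_subset_of_wedgeSubmodule_eq [FiniteDimensional ℝ W] (hB : B.IsSymm)
    (hW : IsNondegOn B W) (hcompl : Codisjoint W W') (horth : ∀ x ∈ W, ∀ y ∈ W', B x y = 0)
    {h : Submodule ℝ (Module.End ℝ V)} (heq : wedgeSubmodule B W h = W) :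
    soPart B W W' ⊆ h := by
  intro A hA
  have hmem {X Y : V} (hX : X ∈ W) (hY : Y ∈ W) : wedge B X Y ∈ h := (heq.ge hX).2 Y hY
  have hsum : (2 : ℝ) • A ∈ h := by
    rw [← sum_wedge_dualBasis_eq_two_smul hB hcompl horth (hW.restrict_nondegenerate hB)
      (finBasis ℝ W) hA]
    exact h.sum_mem fun i _ => hmem (Subtype.property _) (hA.2.1 _ (Subtype.property _))
  exact (h.smul_mem_iff two_ne_zero).1 hsum

lemma wedgeSubmodule_eq_bot_of_irreducible [FiniteDimensional ℝ W] (hB : B.IsSymm)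
    (hW : IsNondegOn B W) (hcompl : Codisjoint W W') (horth : ∀ x ∈ W, ∀ y ∈ W', B x y = 0)
    {h : LieSubalgebra ℝ (Module.End ℝ V)} (hh : (h : Set (Module.End ℝ V)) ⊆ soPart B W W')
    (hne : (h : Set (Module.End ℝ V)) ≠ soPart B W W')
    (hirr : ∀ U : Submodule ℝ V, U ≤ W → Invariant h U → U = ⊥ ∨ U = W) :
    wedgeSubmodule B W h.toSubmodule = ⊥ :=
  (hirr _ (wedgeSubmodule_le _) (invariant_wedgeSubmodule hh)).resolve_right fun heq =>
    hne (hh.antisymm (soPart_subset_of_wedgeSubmodule_eq hB hW hcompl horth heq))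

lemma wedgeSubmodule_eq_bot_of_invariant (hB : B.IsSymm) {U : Submodule ℝ V}
    [FiniteDimensional ℝ U] (hUW : U ≤ W) (hbot : U ≠ ⊥) (htop : U ≠ W) (hU : IsNondegOn B U)
    {h : Submodule ℝ (Module.End ℝ V)} (hinv : Invariant h U) : wedgeSubmodule B W h = ⊥ := by
  refine (Submodule.eq_bot_iff _).2 fun a ⟨_, ha⟩ => ?_
  obtain ⟨v, hvW, hvU⟩ := SetLike.exists_of_lt (hUW.lt_of_ne htop)
  obtain ⟨u, hu, huv⟩ := hU.exists_apply_eq hB (B v)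
  have hvu : v - u ∉ U := fun hmem => hvU ((U.sub_mem_iff_left hu).1 hmem)
  -- As `v - u` is orthogonal to `U`, `a ∧ (v - u)` maps `x ∈ U` to `B(a, x)(v - u)`.
  have haU : ∀ x ∈ U, B a x = 0 := by
    intro x hx
    have hmem : wedge B a (v - u) x ∈ U := hinv _ (ha _ (W.sub_mem hvW (hUW hu))) x hx
    have hperp : B (v - u) x = 0 := by simp [huv x hx]
    rw [wedge_apply, hperp, zero_smul, sub_zero] at hmem
    by_contra hax
    exact hvu ((U.smul_mem_iff hax).1 hmem)
  obtain ⟨z, hz, hzz⟩ := hU.exists_self_ne_zero hB hbot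
  have hmem : wedge B a z z ∈ U := hinv _ (ha z (hUW hz)) z hz
  rw [wedge_apply, haU z hz, zero_smul, zero_sub, U.neg_mem_iff, U.smul_mem_iff hzz] at hmem
  exact hU a hmem haU

lemma wedgeSubmodule_eq_bot_of_pos [FiniteDimensional ℝ W] (hB : B.IsSymm)
    (hpos : ∀ x ∈ W, x ≠ 0 → 0 < B x x) (hcompl : Codisjoint W W')
    (horth : ∀ x ∈ W, ∀ y ∈ W', B x y = 0) {h : LieSubalgebra ℝ (Module.End ℝ V)}
    (hh : (h : Set (Module.End ℝ V)) ⊆ soPart B W W')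
    (hne : (h : Set (Module.End ℝ V)) ≠ soPart B W W') :
    wedgeSubmodule B W h.toSubmodule = ⊥ := by
  by_cases hirr : ∀ U : Submodule ℝ V, U ≤ W → Invariant h U → U = ⊥ ∨ U = W
  · exact wedgeSubmodule_eq_bot_of_irreducible hB (isNondegOn_of_pos hpos) hcompl horth hh hne hirr
  · push Not at hirr
    obtain ⟨U, hUW, hinv, hbot, htop⟩ := hirr
    have : FiniteDimensional ℝ U := Submodule.finiteDimensional_of_le hUW
    exact wedgeSubmodule_eq_bot_of_invariant hB hUW hbot htop
      (isNondegOn_of_pos fun x hx => hpos x (hUW hx)) hinv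

lemma wedgeSubmodule_eq_bot [FiniteDimensional ℝ W] (hB : B.IsSymm) (hW : IsNondegOn B W)
    (hcompl : Codisjoint W W') (horth : ∀ x ∈ W, ∀ y ∈ W', B x y = 0)
    {h : LieSubalgebra ℝ (Module.End ℝ V)} (hh : (h : Set (Module.End ℝ V)) ⊆ soPart B W W')
    (hcond :
      ((h : Set (Module.End ℝ V)) ≠ soPart B W W' ∧
        ∀ U : Submodule ℝ V, U ≤ W → Invariant h U → U = ⊥ ∨ U = W) ∨
      (∃ U : Submodule ℝ V, U ≤ W ∧ U ≠ ⊥ ∧ U ≠ W ∧ IsNondegOn B U ∧ Invariant h U) ∨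
      ((∀ x ∈ W, x ≠ 0 → 0 < B x x) ∧ (h : Set (Module.End ℝ V)) ≠ soPart B W W')) :
    wedgeSubmodule B W h.toSubmodule = ⊥ := by
  rcases hcond with ⟨hne, hirr⟩ | ⟨U, hUW, hbot, htop, hU, hinv⟩ | ⟨hpos, hne⟩
  · exact wedgeSubmodule_eq_bot_of_irreducible hB hW hcompl horth hh hne hirr
  · have : FiniteDimensional ℝ U := Submodule.finiteDimensional_of_le hUW
    exact wedgeSubmodule_eq_bot_of_invariant hB hUW hbot htop hU hinv
  · exact wedgeSubmodule_eq_bot_of_pos hB hpos hcompl horth hh hne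

/-- The first prolongation of `ℝ·id ⊕ h` on `W` vanishes along with `wedgeSubmodule B W h`. -/
lemma scale_eq_zero_of_wedgeSubmodule_eq_bot [FiniteDimensional ℝ W] (hB : B.IsSymm)
    (hW : IsNondegOn B W) (hcompl : Codisjoint W W') (horth : ∀ x ∈ W, ∀ y ∈ W', B x y = 0)
    {h : Submodule ℝ (Module.End ℝ V)} (hh : (h : Set (Module.End ℝ V)) ⊆ soPart B W W')
    (hbot : wedgeSubmodule B W h = ⊥) {θ : Dual ℝ V} {A : V → Module.End ℝ V}
    (hA : ∀ x, A x ∈ h)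
    (hcomm : ∀ x ∈ W, ∀ y ∈ W, θ x • y + A x y = θ y • x + A y x) {x : V} (hx : x ∈ W) :
    θ x = 0 := by
  obtain ⟨a, ha, haθ⟩ := hW.exists_apply_eq hB θ
  have hcomm' : ∀ x ∈ W, ∀ y ∈ W, (A x - wedge B a x) y = (A y - wedge B a y) x := by
    intro x hx y hy
    simp only [LinearMap.sub_apply, wedge_apply, haθ x hx, haθ y hy, hB.eq y x]
    linear_combination (norm := module) hcomm x hx y hy
  have hwedge {x : V} (hx : x ∈ W) : A x = wedge B a x :=
    sub_eq_zero.1 <| eq_zero_of_apply_comm_of_mem_soPart hB hW hcompl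
      (fun x hx => sub_mem_soPart (hh (hA x)) (wedge_mem_soPart hB horth ha hx)) hcomm' hx
  have ha_mem : a ∈ wedgeSubmodule B W h := ⟨ha, fun Y hY => hwedge hY ▸ hA Y⟩
  have ha_zero : a = 0 := by simpa [hbot] using ha_mem
  rw [← haθ x hx, ha_zero, map_zero, LinearMap.zero_apply]

end WedgeSubmodule

/-! ### Invariant subspaces and curvature tensors -/

section Curvature

/-- The extension `ℝ·id ⊕ h` of `h` by the scalars. -/
def scalarExt (h : Submodule ℝ (Module.End ℝ V)) : Submodule ℝ (Module.End ℝ V) :=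
  Submodule.span ℝ {1} ⊔ h

lemma le_scalarExt (h : Submodule ℝ (Module.End ℝ V)) : h ≤ scalarExt h := le_sup_right

lemma one_mem_scalarExt (h : Submodule ℝ (Module.End ℝ V)) : 1 ∈ scalarExt h :=
  Submodule.mem_sup_left (Submodule.mem_span_singleton_self 1)

lemma coe_sup_eq (h h' : Submodule ℝ (Module.End ℝ V)) :
    (↑(h ⊔ h') : Set (Module.End ℝ V)) = {F | ∃ A ∈ h, ∃ A' ∈ h', F = A + A'} := by
  ext F
  simp [Submodule.mem_sup, eq_comm]

lemma coe_scalarExt_sup_eq (h h' : Submodule ℝ (Module.End ℝ V)) :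
    (scalarExt (h ⊔ h') : Set (Module.End ℝ V)) =
      {F | ∃ c : ℝ, ∃ A ∈ h, ∃ A' ∈ h', F = c • (1 : Module.End ℝ V) + A + A'} := by
  ext F
  simp only [scalarExt, SetLike.mem_coe, Submodule.mem_sup, Submodule.mem_span_singleton,
    Set.mem_ofPred_eq, add_assoc]
  constructor
  · rintro ⟨_, ⟨c, rfl⟩, _, ⟨A, hA, A', hA', rfl⟩, rfl⟩
    exact ⟨c, A, hA, A', hA', rfl⟩
  · rintro ⟨c, A, hA, A', hA', rfl⟩
    exact ⟨_, ⟨c, rfl⟩, _, ⟨A, hA, A', hA', rfl⟩, rfl⟩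

variable {B : LinearMap.BilinForm ℝ V} {W W' : Submodule ℝ V}

lemma invariant_soPart_left : Invariant (soPart B W W') W := fun _ hA => hA.2.1

lemma invariant_soPart_right : Invariant (soPart B W W') W' := fun A hA x hx => by
  rw [hA.2.2 x hx]
  exact W'.zero_mem

lemma Invariant.mono {g g' : Set (Module.End ℝ V)} (hg' : Invariant g' W) (hgg' : g ⊆ g') :
    Invariant g W :=
  fun F hF => hg' F (hgg' hF)

lemma Invariant.sup {h h' : Submodule ℝ (Module.End ℝ V)} (hh : Invariant h W)
    (hh' : Invariant h' W) : Invariant ↑(h ⊔ h') W := by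
  intro F hF x hx
  obtain ⟨A, hA, A', hA', rfl⟩ := Submodule.mem_sup.1 hF
  exact W.add_mem (hh A hA x hx) (hh' A' hA' x hx)

lemma Invariant.scalarExt {h : Submodule ℝ (Module.End ℝ V)} (hh : Invariant h W) :
    Invariant (Weyl.scalarExt h) W := by
  refine Invariant.sup (fun F hF x hx => ?_) hh
  obtain ⟨c, rfl⟩ := Submodule.mem_span_singleton.1 hF
  exact W.smul_mem c hx

lemma IsCurv.mono {g g' : Set (Module.End ℝ V)} {R : V →ₗ[ℝ] V →ₗ[ℝ] Module.End ℝ V}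
    (hR : IsCurv g R) (hgg' : g ⊆ g') : IsCurv g' R :=
  ⟨hR.1, fun x y => hgg' (hR.2.1 x y), hR.2.2⟩

lemma curvSpan_le {g : Set (Module.End ℝ V)} {h : Submodule ℝ (Module.End ℝ V)}
    (hgh : ∀ R, IsCurv g R → IsCurv h R) : curvSpan g ≤ h := by
  refine Submodule.span_le.2 ?_
  rintro _ ⟨R, hR, x, y, rfl⟩
  exact (hgh R hR).2.1 x y

lemma IsCurv.apply_eq_zero {g : Set (Module.End ℝ V)} {R : V →ₗ[ℝ] V →ₗ[ℝ] Module.End ℝ V}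
    (hR : IsCurv g R) (hW : Invariant g W) (hW' : Invariant g W') (hdisj : Disjoint W W')
    {x y z : V} (hx : x ∈ W) (hy : y ∈ W) (hz : z ∈ W') : R x y z = 0 := by
  obtain ⟨-, hmem, hbianchi⟩ := hR
  refine Submodule.disjoint_def.1 hdisj _ ?_ (hW' _ (hmem x y) z hz)
  rw [eq_neg_of_add_eq_zero_left ((add_assoc _ _ _).symm.trans (hbianchi x y z))]
  exact W.neg_mem (W.add_mem (hW _ (hmem y z) x hx) (hW _ (hmem z x) y hy))

lemma IsCurv.apply_comm {g : Set (Module.End ℝ V)} {R : V →ₗ[ℝ] V →ₗ[ℝ] Module.End ℝ V}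
    (hR : IsCurv g R) (hW : Invariant g W) (hW' : Invariant g W') (hdisj : Disjoint W W')
    {x y z : V} (hx : x ∈ W) (hy : y ∈ W) (hz : z ∈ W') : R x z y = R y z x := by
  have hbianchi := hR.2.2 x y z
  rw [hR.apply_eq_zero hW hW' hdisj hx hy hz, hR.1 z x, zero_add, LinearMap.neg_apply] at hbianchi
  exact (add_neg_eq_zero.1 hbianchi).symm

end Curvature

/-! ### Orthogonal sums -/

section OrthogonalSum

variable {B : LinearMap.BilinForm ℝ V} {V₁ V₂ : Submodule ℝ V}
  {h₁ h₂ : Submodule ℝ (Module.End ℝ V)} {R : V →ₗ[ℝ] V →ₗ[ℝ] Module.End ℝ V}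
  {f : Dual ℝ (Module.End ℝ V)}

lemma sup_subset_soSet (hh₁ : (h₁ : Set (Module.End ℝ V)) ⊆ soPart B V₁ V₂)
    (hh₂ : (h₂ : Set (Module.End ℝ V)) ⊆ soPart B V₂ V₁) :
    (↑(h₁ ⊔ h₂) : Set (Module.End ℝ V)) ⊆ soSet B := by
  have hle : h₁ ⊔ h₂ ≤ B.skewAdjointSubmodule :=
    sup_le (fun _ hA => mem_soSet_iff.1 (hh₁ hA).1) fun _ hA => mem_soSet_iff.1 (hh₂ hA).1
  exact fun _ hF => mem_soSet_iff.2 (hle hF)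

lemma invariant_scalarExt_sup_left (hh₁ : (h₁ : Set (Module.End ℝ V)) ⊆ soPart B V₁ V₂)
    (hh₂ : (h₂ : Set (Module.End ℝ V)) ⊆ soPart B V₂ V₁) : Invariant (scalarExt (h₁ ⊔ h₂)) V₁ :=
  ((invariant_soPart_left.mono hh₁).sup (invariant_soPart_right.mono hh₂)).scalarExt

lemma invariant_scalarExt_sup_right (hh₁ : (h₁ : Set (Module.End ℝ V)) ⊆ soPart B V₁ V₂)
    (hh₂ : (h₂ : Set (Module.End ℝ V)) ⊆ soPart B V₂ V₁) : Invariant (scalarExt (h₁ ⊔ h₂)) V₂ :=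
  ((invariant_soPart_right.mono hh₁).sup (invariant_soPart_left.mono hh₂)).scalarExt

lemma IsCurv.scale_eq_zero_of_mem_of_mem {g : Set (Module.End ℝ V)} (hR : IsCurv g R)
    (hB : B.IsSymm) (hg₁ : Invariant g V₁) (hg₂ : Invariant g V₂) (hdisj : Disjoint V₁ V₂)
    {w x y : V} (hw : w ∈ V₂) (hww : B w w ≠ 0) (hx : x ∈ V₁) (hy : y ∈ V₁) {c : ℝ}
    (hc : R x y - c • 1 ∈ soSet B) : c = 0 :=
  eq_zero_of_sub_smul_one_mem_soSet hB hc (hR.apply_eq_zero hg₁ hg₂ hdisj hx hy hw) hww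

lemma IsCurv.mixed_scale_eq_zero [FiniteDimensional ℝ V₁] (hR : IsCurv (scalarExt (h₁ ⊔ h₂)) R)
    (hB : B.IsSymm) (hV₁ : IsNondegOn B V₁) (hcompl : IsCompl V₁ V₂)
    (horth : ∀ x ∈ V₁, ∀ y ∈ V₂, B x y = 0)
    (hh₁ : (h₁ : Set (Module.End ℝ V)) ⊆ soPart B V₁ V₂)
    (hh₂ : (h₂ : Set (Module.End ℝ V)) ⊆ soPart B V₂ V₁)
    (hbot : wedgeSubmodule B V₁ h₁ = ⊥)
    (hf : ∀ F ∈ scalarExt (h₁ ⊔ h₂), F - f F • 1 ∈ h₁ ⊔ h₂)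
    {x z : V} (hx : x ∈ V₁) (hz : z ∈ V₂) : f (R x z) = 0 := by
  have hsplit (x : V) : ∃ A₁ ∈ h₁, ∀ y ∈ V₁, R x z y = f (R x z) • y + A₁ y := by
    obtain ⟨A₁, hA₁, A₂, hA₂, hsum⟩ := Submodule.mem_sup.1 (hf _ (hR.2.1 x z))
    refine ⟨A₁, hA₁, fun y hy => ?_⟩
    have happly : R x z y - f (R x z) • y = A₁ y := by
      simpa [(hh₂ hA₂).2.2 y hy] using (LinearMap.congr_fun hsum y).symm
    rw [← happly, add_sub_cancel]
  choose A hA hRA using hsplit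
  refine scale_eq_zero_of_wedgeSubmodule_eq_bot hB hV₁ hcompl.codisjoint horth hh₁ hbot
    (θ := f ∘ₗ R.flip z) hA (fun x hx y hy => ?_) hx
  have hcomm : R x z y = R y z x :=
    hR.apply_comm (invariant_scalarExt_sup_left hh₁ hh₂) (invariant_scalarExt_sup_right hh₁ hh₂)
      hcompl.disjoint hx hy hz
  simpa [hRA x y hy, hRA y x hx] using hcomm

lemma IsCurv.scale_eq_zero [FiniteDimensional ℝ V₁] (hR : IsCurv (scalarExt (h₁ ⊔ h₂)) R)
    (hB : B.IsSymm) (hV₁ : IsNondegOn B V₁) (hV₁_ne : V₁ ≠ ⊥) (hV₂ : ∃ w ∈ V₂, B w w ≠ 0)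
    (hcompl : IsCompl V₁ V₂) (horth : ∀ x ∈ V₁, ∀ y ∈ V₂, B x y = 0)
    (hh₁ : (h₁ : Set (Module.End ℝ V)) ⊆ soPart B V₁ V₂)
    (hh₂ : (h₂ : Set (Module.End ℝ V)) ⊆ soPart B V₂ V₁)
    (hbot : wedgeSubmodule B V₁ h₁ = ⊥)
    (hf : ∀ F ∈ scalarExt (h₁ ⊔ h₂), F - f F • 1 ∈ h₁ ⊔ h₂) (x y : V) : f (R x y) = 0 := by
  have hskew (x y : V) : R x y - f (R x y) • 1 ∈ soSet B :=
    sup_subset_soSet hh₁ hh₂ (hf _ (hR.2.1 x y))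
  have hinv₁ := invariant_scalarExt_sup_left hh₁ hh₂
  have hinv₂ := invariant_scalarExt_sup_right hh₁ hh₂
  obtain ⟨w₁, hw₁, hww₁⟩ := hV₁.exists_self_ne_zero hB hV₁_ne
  obtain ⟨w₂, hw₂, hww₂⟩ := hV₂
  have h₁₁ {x y : V} (hx : x ∈ V₁) (hy : y ∈ V₁) : f (R x y) = 0 :=
    hR.scale_eq_zero_of_mem_of_mem hB hinv₁ hinv₂ hcompl.disjoint hw₂ hww₂ hx hy (hskew x y)
  have h₂₂ {x y : V} (hx : x ∈ V₂) (hy : y ∈ V₂) : f (R x y) = 0 :=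
    hR.scale_eq_zero_of_mem_of_mem hB hinv₂ hinv₁ hcompl.symm.disjoint hw₁ hww₁ hx hy (hskew x y)
  have h₁₂ {x y : V} (hx : x ∈ V₁) (hy : y ∈ V₂) : f (R x y) = 0 :=
    hR.mixed_scale_eq_zero hB hV₁ hcompl horth hh₁ hh₂ hbot hf hx hy
  have h₂₁ {x y : V} (hx : x ∈ V₂) (hy : y ∈ V₁) : f (R x y) = 0 := by
    rw [hR.1 x y, map_neg, h₁₂ hy hx, neg_zero]
  suffices R.compr₂ f = 0 from LinearMap.congr_fun₂ this x y
  exact LinearMap.ext_on_codisjoint hcompl.codisjoint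
    (fun x hx => LinearMap.ext_on_codisjoint hcompl.codisjoint
      (fun y hy => h₁₁ hx hy) fun y hy => h₁₂ hx hy)
    (fun x hx => LinearMap.ext_on_codisjoint hcompl.codisjoint
      (fun y hy => h₂₁ hx hy) fun y hy => h₂₂ hx hy)

theorem conformal_sum_not_Berger_general (B : LinearMap.BilinForm ℝ V) (hB : B.IsSymm)
    (V₁ V₂ : Submodule ℝ V) [FiniteDimensional ℝ V₁] (hcompl : IsCompl V₁ V₂)
    (horth : ∀ x ∈ V₁, ∀ y ∈ V₂, B x y = 0) (hV₁_ne : V₁ ≠ ⊥) (hV₁ : IsNondegOn B V₁)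
    (hV₂ : ∃ w ∈ V₂, B w w ≠ 0) (h₁ h₂ : Submodule ℝ (Module.End ℝ V))
    (hh₁ : (h₁ : Set (Module.End ℝ V)) ⊆ soPart B V₁ V₂)
    (hh₂ : (h₂ : Set (Module.End ℝ V)) ⊆ soPart B V₂ V₁)
    (hbot : wedgeSubmodule B V₁ h₁ = ⊥) :
    (∀ R : V →ₗ[ℝ] V →ₗ[ℝ] Module.End ℝ V,
        IsCurv (scalarExt (h₁ ⊔ h₂)) R ↔ IsCurv ↑(h₁ ⊔ h₂) R) ∧
      curvSpan (scalarExt (h₁ ⊔ h₂) : Set (Module.End ℝ V)) ≤ h₁ ⊔ h₂ ∧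
      ¬ IsBerger (scalarExt (h₁ ⊔ h₂) : Set (Module.End ℝ V)) := by
  have hone : 1 ∉ h₁ ⊔ h₂ := by
    obtain ⟨w, -, hw⟩ := hV₂
    exact fun hmem => one_notMem_soSet hw (sup_subset_soSet hh₁ hh₂ hmem)
  have hcurv (R : V →ₗ[ℝ] V →ₗ[ℝ] Module.End ℝ V) (hR : IsCurv (scalarExt (h₁ ⊔ h₂)) R) :
      IsCurv ↑(h₁ ⊔ h₂) R := by
    obtain ⟨f, hf⟩ := exists_dual_sub_smul_mem hone
    refine ⟨hR.1, fun x y => ?_, hR.2.2⟩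
    have hscale := hR.scale_eq_zero hB hV₁ hV₁_ne hV₂ hcompl horth hh₁ hh₂ hbot hf x y
    simpa [hscale] using hf _ (hR.2.1 x y)
  refine ⟨fun R => ⟨hcurv R, fun hR => hR.mono (le_scalarExt _)⟩, curvSpan_le hcurv,
    fun hBerger => hone (curvSpan_le hcurv ?_)⟩
  exact hBerger.ge (one_mem_scalarExt _)

end OrthogonalSum

/-- Let `V = V₁ ⊕ V₂` be a nontrivial orthogonal decomposition of a
pseudo-Euclidean space, `𝔥₁ ⊆ so(V₁)` a subalgebra which is (i) proper and
irreducible, or (ii) preserves a proper nondegenerate subspace of `V₁`, or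
(iii) `V₁` is Euclidean and `𝔥₁` is proper, and let `𝔥₂ ⊆ so(V₂)` be arbitrary.
Then `ℛ(𝔥₁ ⊕ 𝔥₂ ⊕ ℝ·id) = ℛ(𝔥₁ ⊕ 𝔥₂)`, `L(ℛ(𝔥₁ ⊕ 𝔥₂ ⊕ ℝ·id)) ⊆ 𝔥₁ ⊕ 𝔥₂`,
and `𝔥₁ ⊕ 𝔥₂ ⊕ ℝ·id` is not a Berger algebra. -/
theorem conformal_sum_not_Berger
    [FiniteDimensional ℝ V] (B : LinearMap.BilinForm ℝ V)
    (hsymm : ∀ x y, B x y = B y x) (hnd : ∀ x, (∀ y, B x y = 0) → x = 0)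
    (V₁ V₂ : Submodule ℝ V) (hcompl : IsCompl V₁ V₂)
    (horth : ∀ x ∈ V₁, ∀ y ∈ V₂, B x y = 0)
    (hV1 : V₁ ≠ ⊥) (hV2 : V₂ ≠ ⊥)
    (hnd1 : IsNondegOn B V₁) (hnd2 : IsNondegOn B V₂)
    (h₁ h₂ : Set (Module.End ℝ V))
    (hs1 : IsLieSub h₁) (hs2 : IsLieSub h₂)
    (hh1 : h₁ ⊆ soPart B V₁ V₂) (hh2 : h₂ ⊆ soPart B V₂ V₁)
    (hcond :
      (h₁ ≠ soPart B V₁ V₂ ∧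
        ∀ W : Submodule ℝ V, W ≤ V₁ → Invariant h₁ W → W = ⊥ ∨ W = V₁) ∨
      (∃ W : Submodule ℝ V, W ≤ V₁ ∧ W ≠ ⊥ ∧ W ≠ V₁ ∧
        IsNondegOn B W ∧ Invariant h₁ W) ∨
      ((∀ x ∈ V₁, x ≠ 0 → 0 < B x x) ∧ h₁ ≠ soPart B V₁ V₂)) :
    (∀ R, IsCurv {F | ∃ c : ℝ, ∃ A₁ ∈ h₁, ∃ A₂ ∈ h₂,
          F = c • (1 : Module.End ℝ V) + A₁ + A₂} R ↔
        IsCurv {F | ∃ A₁ ∈ h₁, ∃ A₂ ∈ h₂, F = A₁ + A₂} R) ∧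
    (curvSpan {F | ∃ c : ℝ, ∃ A₁ ∈ h₁, ∃ A₂ ∈ h₂,
          F = c • (1 : Module.End ℝ V) + A₁ + A₂} : Set (Module.End ℝ V))
        ⊆ {F | ∃ A₁ ∈ h₁, ∃ A₂ ∈ h₂, F = A₁ + A₂} ∧
    ¬ IsBerger {F | ∃ c : ℝ, ∃ A₁ ∈ h₁, ∃ A₂ ∈ h₂,
          F = c • (1 : Module.End ℝ V) + A₁ + A₂} := by
  have hB : B.IsSymm := ⟨hsymm⟩
  have hmain := conformal_sum_not_Berger_general B hB V₁ V₂ hcompl horth hV1 hnd1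
    (hnd2.exists_self_ne_zero hB hV2) hs1.toLieSubalgebra.toSubmodule
    hs2.toLieSubalgebra.toSubmodule hh1 hh2
    (wedgeSubmodule_eq_bot hB hnd1 hcompl.codisjoint horth hh1 hcond)
  rwa [← SetLike.coe_subset_coe, coe_sup_eq, coe_scalarExt_sup_eq] at hmain

end Weyl
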